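/- Let B ⊂ A be an inclusion of C*-algebras and let M be a finitely generated Hilbert B-bimodule in A with finite set of generators {ψ_l}. Then P_M := Σ_l ψ_l ψ_l* is a projection in A, P_M does not depend on the choice of the generators, and P_M ψ = ψ for every ψ ∈ M. -/

import Mathlib

/-!
STATEMENT 0: Let `B ⊂ A` be an inclusion of C*-algebras and let `M` be a finitely
generated Hilbert `B`-bimodule in `A` with finite set of generators `{ψ_l}`.
Then `P_M := Σ_l ψ_l ψ_l*` is a projection in `A`, `P_M` does not depend on the
choice of the generators, and `P_M ψ = ψ` for every `ψ ∈ M`.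
-/

open scoped BigOperators

/-- A Hilbert `B`-bimodule in a C*-algebra `A` (where `B` is a C*-subalgebra of `A`,
i.e. a norm-closed star subalgebra): a norm-closed subspace `M ⊆ A` such that
`B·M ⊆ M`, `M·B ⊆ M` and `M*·M ⊆ B`. -/
structure HilbertBimoduleIn (A : Type*) [NonUnitalCStarAlgebra A]
    (B : NonUnitalStarSubalgebra ℂ A) : Type _ where
  carrier : Submodule ℂ A
  isClosed : IsClosed (carrier : Set A)
  left_mul_mem : ∀ b ∈ B, ∀ m ∈ carrier, b * m ∈ carrier
  right_mul_mem : ∀ m ∈ carrier, ∀ b ∈ B, m * b ∈ carrier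
  inner_mem : ∀ m ∈ carrier, ∀ m' ∈ carrier, star m * m' ∈ B

/-- A finite family `ψ : ι → A` is a generating family for the Hilbert bimodule `M` in `A`
if every `ψ_i` lies in `M` and every `m ∈ M` satisfies `m = Σ_i ψ_i ψ_i* m`
(so that `m` is a right linear combination, with coefficients in `B`, of the `ψ_i`). -/
def HilbertBimoduleIn.IsGeneratingFamily {A : Type*} [NonUnitalCStarAlgebra A]
    {B : NonUnitalStarSubalgebra ℂ A} (M : HilbertBimoduleIn A B)
    {ι : Type*} [Fintype ι] (ψ : ι → A) : Prop :=
  (∀ i, ψ i ∈ M.carrier) ∧ ∀ m ∈ M.carrier, m = ∑ i, ψ i * star (ψ i) * m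

/-!
Put `P = ∑ ψ_l ψ_l*` and `Q = ∑ φ_l φ_l*`. Since `P` fixes every element of `M`, it fixes each
left factor `φ_l` of `Q`, so `P Q = Q`; with `φ = ψ` this is idempotence. By symmetry `Q P = P`.
As `P` and `Q` are self-adjoint and so is `P Q = Q`, they commute, whence `P = Q P = P Q = Q`.
-/

section ParsevalFrame

variable {A ι κ : Type*} [Fintype ι] [Fintype κ]

/-- The element `∑ ψ_l ψ_l*` of `A`, left multiplication by which is the frame operator
`m ↦ ∑ ψ_l ⟨ψ_l, m⟩` for the `A`-valued scalar product `⟨x, y⟩ = x* y`. It is the support `P_M`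
when `ψ` generates `M`. -/
def frameElement [NonUnitalNonAssocSemiring A] [Star A] (ψ : ι → A) : A :=
  ∑ i, ψ i * star (ψ i)

/-- A finite Parseval frame of a set `S`: a family in `S` satisfying the reconstruction formula
`m = ∑ ψ_l ψ_l* m` on `S`. When `S` is a Hilbert bimodule in `A`, these are its finite generating
families. -/
structure IsParsevalFrameOn [NonUnitalNonAssocSemiring A] [Star A] (S : Set A) (ψ : ι → A) :
    Prop where
  mem : ∀ i, ψ i ∈ S
  reconstruction : ∀ m ∈ S, m = ∑ i, ψ i * star (ψ i) * m

theorem isSelfAdjoint_frameElement [NonUnitalNonAssocSemiring A] [StarRing A] (ψ : ι → A) :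
    IsSelfAdjoint (frameElement ψ) :=
  isSelfAdjoint_sum _ fun i _ => IsSelfAdjoint.mul_star_self (ψ i)

theorem mul_frameElement_eq_of_forall_mul_eq [NonUnitalSemiring A] [Star A] {p : A} {ψ : ι → A}
    (h : ∀ i, p * ψ i = ψ i) : p * frameElement ψ = frameElement ψ := by
  simp only [frameElement, Finset.mul_sum, ← mul_assoc, h]

namespace IsParsevalFrameOn

theorem frameElement_mul_eq [NonUnitalNonAssocSemiring A] [Star A] {S : Set A} {ψ : ι → A}
    (hψ : IsParsevalFrameOn S ψ) {m : A} (hm : m ∈ S) : frameElement ψ * m = m := by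
  rw [frameElement, Finset.sum_mul, ← hψ.reconstruction m hm]

theorem frameElement_mul_frameElement [NonUnitalSemiring A] [Star A] {S : Set A} {ψ : ι → A}
    (hψ : IsParsevalFrameOn S ψ) {φ : κ → A} (hφ : ∀ j, φ j ∈ S) :
    frameElement ψ * frameElement φ = frameElement φ :=
  mul_frameElement_eq_of_forall_mul_eq fun j => hψ.frameElement_mul_eq (hφ j)

variable [NonUnitalSemiring A] [StarRing A] {S : Set A} {ψ : ι → A} {φ : κ → A}

theorem isStarProjection_frameElement (hψ : IsParsevalFrameOn S ψ) :
    IsStarProjection (frameElement ψ) where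
  isIdempotentElem := hψ.frameElement_mul_frameElement hψ.mem
  isSelfAdjoint := isSelfAdjoint_frameElement ψ

theorem frameElement_eq (hψ : IsParsevalFrameOn S ψ) (hφ : IsParsevalFrameOn S φ) :
    frameElement ψ = frameElement φ := by
  have hψφ : frameElement ψ * frameElement φ = frameElement φ :=
    hψ.frameElement_mul_frameElement hφ.mem
  have hcomm : Commute (frameElement ψ) (frameElement φ) := by
    rw [(isSelfAdjoint_frameElement ψ).commute_iff (isSelfAdjoint_frameElement φ), hψφ]
    exact isSelfAdjoint_frameElement φ
  calc
    frameElement ψ = frameElement φ * frameElement ψ :=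
      (hφ.frameElement_mul_frameElement hψ.mem).symm
    _ = frameElement ψ * frameElement φ := hcomm.eq.symm
    _ = frameElement φ := hψφ

end IsParsevalFrameOn

theorem support_of_fin_gen_hilbert_bimodule_in_general [NonUnitalSemiring A] [StarRing A]
    {S : Set A} {ψ : ι → A} {φ : κ → A}
    (hψ : IsParsevalFrameOn S ψ) (hφ : IsParsevalFrameOn S φ) :
    IsSelfAdjoint (frameElement ψ) ∧
      IsIdempotentElem (frameElement ψ) ∧
      frameElement ψ = frameElement φ ∧
      ∀ m ∈ S, frameElement ψ * m = m :=
  ⟨hψ.isStarProjection_frameElement.isSelfAdjoint,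
    hψ.isStarProjection_frameElement.isIdempotentElem,
    hψ.frameElement_eq hφ,
    fun _ hm => hψ.frameElement_mul_eq hm⟩

end ParsevalFrame

theorem HilbertBimoduleIn.IsGeneratingFamily.isParsevalFrameOn {A : Type*}
    [NonUnitalCStarAlgebra A] {B : NonUnitalStarSubalgebra ℂ A} {M : HilbertBimoduleIn A B}
    {ι : Type*} [Fintype ι] {ψ : ι → A} (hψ : M.IsGeneratingFamily ψ) :
    IsParsevalFrameOn (M.carrier : Set A) ψ where
  mem := hψ.1
  reconstruction := hψ.2

/-- The support `P_M = Σ_l ψ_l ψ_l*` of a finitely generated Hilbert bimodule is a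
projection (a self-adjoint idempotent), it is independent of the choice of the finite
generating family, and `P_M ψ = ψ` for every `ψ ∈ M`. -/
theorem support_of_fin_gen_hilbert_bimodule_in
    {A : Type*} [NonUnitalCStarAlgebra A] (B : NonUnitalStarSubalgebra ℂ A)
    (hB : IsClosed (B : Set A)) (M : HilbertBimoduleIn A B)
    {ι κ : Type*} [Fintype ι] [Fintype κ] (ψ : ι → A) (φ : κ → A)
    (hψ : M.IsGeneratingFamily ψ) (hφ : M.IsGeneratingFamily φ) :
    IsSelfAdjoint (∑ i, ψ i * star (ψ i)) ∧
      IsIdempotentElem (∑ i, ψ i * star (ψ i)) ∧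
      (∑ i, ψ i * star (ψ i)) = (∑ j, φ j * star (φ j)) ∧
      ∀ m ∈ M.carrier, (∑ i, ψ i * star (ψ i)) * m = m :=
  support_of_fin_gen_hilbert_bimodule_in_general hψ.isParsevalFrameOn hφ.isParsevalFrameOn
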